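/- Let d_f = log 3 / log 2 and let μ_n = 3^{−n} Σ_{x∈V_n} δ_x be the measure assigning mass 3^{−n} to each point of V_n. Then 0 < H^{d_f}(V) < ∞ for the d_f-dimensional Hausdorff measure H^{d_f}, and there exists a constant c ∈ (0,∞) such that the sequence of measures μ_n converges weakly to c · H^{d_f} restricted to V. -/

import Mathlib

open Set MeasureTheory Filter Topology
open scoped Classical ENNReal NNReal BoundedContinuousFunction

noncomputable section

/-- The plane, with the Euclidean norm. -/
abbrev Pt : Type := EuclideanSpace ℝ (Fin 2)

/-- The three vertexes of the initial equilateral triangle. -/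
def ptA : Fin 3 → Pt
  | 0 => (WithLp.equiv 2 (Fin 2 → ℝ)).symm ![0, 0]
  | 1 => (WithLp.equiv 2 (Fin 2 → ℝ)).symm ![1, 0]
  | 2 => (WithLp.equiv 2 (Fin 2 → ℝ)).symm ![1 / 2, Real.sqrt 3 / 2]

/-- The contraction `fᵢ(z) = (z + aᵢ)/2`. -/
def sgMap (i : Fin 3) (z : Pt) : Pt := (2 : ℝ)⁻¹ • (z + ptA i)

/-- The vertex sets `V_n`. -/
def Vn : ℕ → Finset Pt
  | 0 => {ptA 0, ptA 1, ptA 2}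
  | n + 1 => (Vn n).image (sgMap 0) ∪ (Vn n).image (sgMap 1) ∪ (Vn n).image (sgMap 2)

/-- `V* = ⋃ₙ Vₙ`. -/
def Vstar : Set Pt := ⋃ n, (Vn n : Set Pt)

/-- The Sierpinski gasket `V`, the closure of `V*`. -/
def sg : Set Pt := closure Vstar

lemma Vstar_subset_sg {x : Pt} (hx : x ∈ Vstar) : x ∈ sg :=
  subset_closure hx

lemma Vn_subset_sg {n : ℕ} {x : Pt} (hx : x ∈ Vn n) : x ∈ sg :=
  subset_closure (Set.mem_iUnion.mpr ⟨n, hx⟩)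

/-- `{x,y}` is an edge of the graph `Γₙ`. -/
def isEdge (n : ℕ) (x y : Pt) : Prop := ‖x - y‖ = (2 : ℝ) ^ (-(n : ℤ))

/-- The discrete energy form `𝓔ₙ(u,v) = (5/3)ⁿ Σ_{{x,y}∈Eₙ} (u(y)-u(x))(v(y)-v(x))`;
the sum over unordered pairs is written as half the sum over ordered pairs. -/
def energyBi (n : ℕ) (u v : Pt → ℝ) : ℝ :=
  (5 / 3 : ℝ) ^ n * (1 / 2) *
    ∑ x ∈ Vn n, ∑ y ∈ Vn n, if isEdge n x y then (u y - u x) * (v y - v x) else 0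

/-- The discrete energy `𝓔ₙ(u,u)`. -/
def energy (n : ℕ) (u : Pt → ℝ) : ℝ := energyBi n u u

/-- The discrete Laplacian `Δₙ g(x) = 5ⁿ Σ_{y:{x,y}∈Eₙ} (g(y)-g(x))`. -/
def discLap (n : ℕ) (g : Pt → ℝ) (x : Pt) : ℝ :=
  (5 : ℝ) ^ n * ∑ y ∈ Vn n, if isEdge n x y then g y - g x else 0

/-- A function on `V*` has finite energy if `supₙ 𝓔ₙ(u,u) < ∞`. -/
def FiniteEnergy (u : Pt → ℝ) : Prop := BddAbove (Set.range fun n => energy n u)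

/-- The empirical vertex measure `μₙ`, giving mass `3⁻ⁿ` to each point of `Vₙ`. -/
def empMeas (n : ℕ) : Measure Pt :=
  ((3 : ℝ≥0∞) ^ n)⁻¹ • ∑ x ∈ Vn n, Measure.dirac x

/-- Extension by zero of a continuous function on the gasket. -/
def sgExt (f : C(sg, ℝ)) (x : Pt) : ℝ := if hx : x ∈ sg then f ⟨x, hx⟩ else 0

/-- `h(k)! = h(1)⋯h(k)`, with `h(0)! = 1`. -/
def hfact (h : ℕ → ℝ) (k : ℕ) : ℝ := ∏ i ∈ Finset.range k, h (i + 1)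

/-- The partition function `Z(φ) = Σₖ φᵏ/h(k)!`. -/
def Zfun (h : ℕ → ℝ) (φ : ℝ) : ℝ := ∑' k, φ ^ k / hfact h k

/-- The one-site marginal `p_φ(k) = Z(φ)⁻¹ φᵏ/h(k)!`. -/
def pmarg (h : ℕ → ℝ) (φ : ℝ) (k : ℕ) : ℝ := (Zfun h φ)⁻¹ * φ ^ k / hfact h k

/-- The mean of the one-site marginal `p_φ`. -/
def meanFun (h : ℕ → ℝ) (φ : ℝ) : ℝ := ∑' k : ℕ, (k : ℝ) * pmarg h φ k

/-- The zero-range generator on `Ωₙ = ℕ^{Vₙ}`, summing over ordered pairs `(x,y)`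
with `{x,y} ∈ Eₙ`. -/
def zrGen (n : ℕ) (h : ℕ → ℝ) (F : (↥(Vn n) → ℕ) → ℝ) (η : ↥(Vn n) → ℕ) : ℝ :=
  ∑ x : ↥(Vn n), ∑ y : ↥(Vn n),
    if isEdge n x.1 y.1 then
      h (η x) * (F (Function.update (Function.update η x (η x - 1)) y (η y + 1)) - F η)
    else 0

/-! ### Barycentric coordinates -/

/-- Barycentric coordinates with respect to the initial triangle. -/
def lam : Fin 3 → Pt → ℝ
  | 0, z => 1 - z 0 - z 1 / Real.sqrt 3
  | 1, z => z 0 - z 1 / Real.sqrt 3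
  | 2, z => 2 * z 1 / Real.sqrt 3

lemma sgMap_apply (i : Fin 3) (z : Pt) (k : Fin 2) : sgMap i z k = (z k + ptA i k) / 2 := by
  simp [sgMap]; ring

lemma ptA_00 : ptA 0 0 = 0 := by simp [ptA]
lemma ptA_01 : ptA 0 1 = 0 := by simp [ptA]
lemma ptA_10 : ptA 1 0 = 1 := by simp [ptA]
lemma ptA_11 : ptA 1 1 = 0 := by simp [ptA]
lemma ptA_20 : ptA 2 0 = 1 / 2 := by simp [ptA]
lemma ptA_21 : ptA 2 1 = Real.sqrt 3 / 2 := by simp [ptA]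

lemma ptA_zero : ptA 0 = 0 := by
  ext k; fin_cases k <;> simp [ptA]

lemma sqrt3_pos : 0 < Real.sqrt 3 := by positivity

lemma lam_sgMap (i j : Fin 3) (z : Pt) :
    lam i (sgMap j z) = (lam i z + if i = j then 1 else 0) / 2 := by
  have h := sqrt3_pos.ne'
  fin_cases i <;> fin_cases j <;>
    simp [lam, sgMap_apply, ptA_00, ptA_01, ptA_10, ptA_11, ptA_20, ptA_21] <;> field_simp <;> ring

lemma lam_ptA (i j : Fin 3) : lam i (ptA j) = if i = j then 1 else 0 := by
  have h := sqrt3_pos.ne'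
  fin_cases i <;> fin_cases j <;>
    simp [lam, ptA_00, ptA_01, ptA_10, ptA_11, ptA_20, ptA_21] <;> field_simp <;> ring

lemma lam_sum (z : Pt) : lam 0 z + lam 1 z + lam 2 z = 1 := by
  simp [lam]; ring

lemma lam_ext {z w : Pt} (h1 : lam 1 z = lam 1 w) (h2 : lam 2 z = lam 2 w) : z = w := by
  have h := sqrt3_pos.ne'
  simp only [lam] at h1 h2
  have h3 : z 1 = w 1 := by
    field_simp at h2; linarith
  have h4 : z 0 = w 0 := by
    rw [h3] at h1; linarith
  ext k; fin_cases k <;> simp [h3, h4]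

lemma lam_continuous (i : Fin 3) : Continuous (lam i) := by
  have e : ∀ k : Fin 2, Continuous fun z : Pt => z k := fun k => by fun_prop
  have h0 : Continuous fun z : Pt => 1 - z 0 - z 1 / Real.sqrt 3 := by fun_prop
  have h1 : Continuous fun z : Pt => z 0 - z 1 / Real.sqrt 3 := by fun_prop
  have h2 : Continuous fun z : Pt => 2 * z 1 / Real.sqrt 3 := by fun_prop
  fin_cases i
  · exact h0
  · exact h1
  · exact h2

lemma coord_dist (z w : Pt) (k : Fin 2) : |z k - w k| ≤ dist z w := by
  have := PiLp.norm_apply_le (z - w) k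
  rw [dist_eq_norm]
  simpa using this

lemma lam_dist (i : Fin 3) (z w : Pt) : |lam i z - lam i w| ≤ 2 * dist z w := by
  have h0 := coord_dist z w 0
  have h1 := coord_dist z w 1
  have hs : 1 ≤ Real.sqrt 3 := by
    rw [Real.one_le_sqrt]; norm_num
  have h2 : |(z 1 - w 1) / Real.sqrt 3| ≤ |z 1 - w 1| := by
    rw [abs_div, abs_of_pos sqrt3_pos]
    exact div_le_self (abs_nonneg _) hs
  have a0 := abs_le.1 h0
  have a2 := abs_le.1 (h2.trans h1)
  rw [sub_div] at a2
  rw [abs_le]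
  fin_cases i <;> simp only [lam, mul_div_assoc] <;> constructor <;> linarith

/-! ### Basic properties of the gasket -/

lemma ptA_norm (i : Fin 3) : ‖ptA i‖ ≤ 1 := by
  rw [EuclideanSpace.norm_eq, Real.sqrt_le_one]
  fin_cases i <;>
    simp [Fin.sum_univ_two, ptA_00, ptA_01, ptA_10, ptA_11, ptA_20, ptA_21, div_pow] <;> norm_num

lemma sgMap_dist (i : Fin 3) (z w : Pt) : dist (sgMap i z) (sgMap i w) = dist z w / 2 := by
  simp only [sgMap, dist_smul₀, dist_add_right]
  norm_num; ring

lemma sgMap_continuous (i : Fin 3) : Continuous (sgMap i) := by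
  unfold sgMap; fun_prop

lemma sgMap_injective (i : Fin 3) : Function.Injective (sgMap i) := by
  intro z w h
  have := sgMap_dist i z w
  rw [h, dist_self] at this
  exact dist_eq_zero.1 (by linarith)

lemma sgMap_ptA (i : Fin 3) : sgMap i (ptA i) = ptA i := by
  ext k; rw [sgMap_apply]; ring

lemma sgMap_comm (i j : Fin 3) : sgMap i (ptA j) = sgMap j (ptA i) := by
  simp [sgMap, add_comm]

lemma mem_Vn_zero {x : Pt} : x ∈ Vn 0 ↔ ∃ i, x = ptA i := by
  simp [Vn, Fin.exists_fin_succ]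

lemma mem_Vn_succ {n : ℕ} {x : Pt} : x ∈ Vn (n + 1) ↔ ∃ i, ∃ y ∈ Vn n, sgMap i y = x := by
  simp [Vn, Fin.exists_fin_succ, or_assoc]

lemma ptA_mem_Vn (n : ℕ) (i : Fin 3) : ptA i ∈ Vn n := by
  induction n with
  | zero => exact mem_Vn_zero.2 ⟨i, rfl⟩
  | succ n ih => exact mem_Vn_succ.2 ⟨i, _, ih, sgMap_ptA i⟩

lemma Vn_norm {n : ℕ} : ∀ {x : Pt}, x ∈ Vn n → ‖x‖ ≤ 1 := by
  induction n with
  | zero =>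
    intro x hx
    obtain ⟨i, rfl⟩ := mem_Vn_zero.1 hx
    exact ptA_norm i
  | succ n ih =>
    intro x hx
    obtain ⟨i, y, hy, rfl⟩ := mem_Vn_succ.1 hx
    have h1 := ih hy
    have h2 := ptA_norm i
    have h3 := norm_add_le y (ptA i)
    rw [sgMap, norm_smul]
    norm_num
    linarith

lemma Vn_lam {n : ℕ} : ∀ {x : Pt}, x ∈ Vn n → ∀ j, 0 ≤ lam j x := by
  induction n with
  | zero =>
    intro x hx j
    obtain ⟨i, rfl⟩ := mem_Vn_zero.1 hx
    rw [lam_ptA]; split_ifs <;> norm_num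
  | succ n ih =>
    intro x hx j
    obtain ⟨i, y, hy, rfl⟩ := mem_Vn_succ.1 hx
    have h1 := ih hy j
    rw [lam_sgMap]; split_ifs <;> linarith

lemma sg_norm {x : Pt} (hx : x ∈ sg) : ‖x‖ ≤ 1 := by
  have : sg ⊆ {x : Pt | ‖x‖ ≤ 1} := by
    refine closure_minimal ?_ (isClosed_le continuous_norm continuous_const)
    intro x hx
    obtain ⟨n, hn⟩ := mem_iUnion.1 hx
    exact Vn_norm hn
  exact this hx

lemma sg_lam {x : Pt} (hx : x ∈ sg) (j : Fin 3) : 0 ≤ lam j x := by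
  have : sg ⊆ {x : Pt | 0 ≤ lam j x} := by
    refine closure_minimal ?_ (isClosed_le continuous_const (lam_continuous j))
    intro x hx
    obtain ⟨n, hn⟩ := mem_iUnion.1 hx
    exact Vn_lam hn j
  exact this hx

lemma sg_lam_le {x : Pt} (hx : x ∈ sg) (j : Fin 3) : lam j x ≤ 1 := by
  have h0 := sg_lam hx 0
  have h1 := sg_lam hx 1
  have h2 := sg_lam hx 2
  have := lam_sum x
  fin_cases j <;> simp <;> linarith

lemma sg_compact : IsCompact sg := by
  refine Metric.isCompact_of_isClosed_isBounded isClosed_closure ?_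
  refine (Metric.isBounded_closedBall (x := (0 : Pt)) (r := 1)).subset ?_
  intro x hx
  simpa using sg_norm hx

lemma sgMap_mem_sg {i : Fin 3} {x : Pt} (hx : x ∈ sg) : sgMap i x ∈ sg := by
  have h : MapsTo (sgMap i) Vstar Vstar := by
    intro y hy
    obtain ⟨n, hn⟩ := mem_iUnion.1 hy
    exact mem_iUnion.2 ⟨n + 1, mem_Vn_succ.2 ⟨i, y, hn, rfl⟩⟩
  exact h.closure (sgMap_continuous i) hx

lemma sg_eq : sg = ⋃ i, sgMap i '' sg := by
  apply Subset.antisymm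
  · refine closure_minimal ?_ ?_
    · intro x hx
      obtain ⟨n, hn⟩ := mem_iUnion.1 hx
      cases n with
      | zero =>
        obtain ⟨i, rfl⟩ := mem_Vn_zero.1 hn
        exact mem_iUnion.2 ⟨i, ptA i, Vn_subset_sg (ptA_mem_Vn 0 i), sgMap_ptA i⟩
      | succ n =>
        obtain ⟨i, y, hy, rfl⟩ := mem_Vn_succ.1 hn
        exact mem_iUnion.2 ⟨i, y, Vn_subset_sg hy, rfl⟩
    · exact isClosed_iUnion_of_finite fun i =>
        (sg_compact.image (sgMap_continuous i)).isClosed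
  · refine iUnion_subset fun i => ?_
    rintro _ ⟨y, hy, rfl⟩
    exact sgMap_mem_sg hy

lemma ptA_mem_sg (i : Fin 3) : ptA i ∈ sg := Vn_subset_sg (ptA_mem_Vn 0 i)

/-- Distinct first-level cells of the gasket meet in a single vertex. -/
lemma cell_inter {i j : Fin 3} (hij : i ≠ j) {x y : Pt} (hx : x ∈ sg) (hy : y ∈ sg)
    (h : sgMap i x = sgMap j y) : x = ptA j := by
  have key : ∀ k, lam k (sgMap i x) = lam k (sgMap j y) := fun k => by rw [h]
  simp only [lam_sgMap] at key
  have hi := key i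
  simp [hij] at hi
  have h1 := sg_lam_le hy i
  have h2 := sg_lam hx
  have hs := lam_sum x
  have hk := key j
  simp [hij.symm] at hk
  have h3 := sg_lam hy j
  have h4 := sg_lam_le hx j
  have hj : lam j x = 1 := by linarith
  have a0 := h2 0
  have a1 := h2 1
  have a2 := h2 2
  apply lam_ext <;> rw [lam_ptA] <;> fin_cases j <;> simp at hj ⊢ <;> linarith

/-! ### The vertex sums -/

lemma sum_Vn_succ (n : ℕ) (g : Pt → ℝ) :
    ∑ x ∈ Vn (n + 1), g x = ∑ x ∈ Vn n, (g (sgMap 0 x) + g (sgMap 1 x) + g (sgMap 2 x))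
      - (g (sgMap 0 (ptA 1)) + g (sgMap 0 (ptA 2)) + g (sgMap 1 (ptA 2))) := by
  have hI : ∀ {i j : Fin 3}, i ≠ j →
      (Vn n).image (sgMap i) ∩ (Vn n).image (sgMap j) = {sgMap i (ptA j)} := by
    intro i j hij
    ext x
    simp only [Finset.mem_inter, Finset.mem_image, Finset.mem_singleton]
    constructor
    · rintro ⟨⟨y, hy, rfl⟩, z, hz, hzy⟩
      rw [cell_inter hij (Vn_subset_sg hy) (Vn_subset_sg hz) hzy.symm]
    · rintro rfl
      exact ⟨⟨_, ptA_mem_Vn n j, rfl⟩, _, ptA_mem_Vn n i, sgMap_comm j i⟩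
  have hs : ∀ i, ∑ x ∈ (Vn n).image (sgMap i), g x = ∑ x ∈ Vn n, g (sgMap i x) := fun i =>
    Finset.sum_image fun x _ y _ h => sgMap_injective i h
  have hne : sgMap 0 (ptA 2) ≠ sgMap 1 (ptA 2) := by
    intro h
    have := congrArg (lam 1) h
    simp [lam_sgMap, lam_ptA] at this
  have e1 := Finset.sum_union_inter (s₁ := (Vn n).image (sgMap 0)) (s₂ := (Vn n).image (sgMap 1))
    (f := g)
  have e2 := Finset.sum_union_inter
    (s₁ := (Vn n).image (sgMap 0) ∪ (Vn n).image (sgMap 1)) (s₂ := (Vn n).image (sgMap 2)) (f := g)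
  rw [Finset.union_inter_distrib_right, hI (by decide), hI (by decide)] at e2
  rw [hI (by decide)] at e1
  have e3 : ∑ x ∈ ({sgMap 0 (ptA 2)} ∪ {sgMap 1 (ptA 2)} : Finset Pt), g x
      = g (sgMap 0 (ptA 2)) + g (sgMap 1 (ptA 2)) := by
    rw [Finset.sum_union (by simpa using hne)]; simp
  rw [e3] at e2
  simp only [hs, Finset.sum_singleton] at e1 e2
  have : Vn (n + 1) = (Vn n).image (sgMap 0) ∪ (Vn n).image (sgMap 1) ∪ (Vn n).image (sgMap 2) := rfl
  rw [this, Finset.sum_add_distrib, Finset.sum_add_distrib]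
  linarith

lemma card_Vn (n : ℕ) : ((Vn n).card : ℝ) = (3 * 3 ^ n + 3) / 2 := by
  induction n with
  | zero =>
    have h01 : ptA 0 ≠ ptA 1 := fun h => by simpa [lam_ptA] using congrArg (lam 1) h
    have h02 : ptA 0 ≠ ptA 2 := fun h => by simpa [lam_ptA] using congrArg (lam 2) h
    have h12 : ptA 1 ≠ ptA 2 := fun h => by simpa [lam_ptA] using congrArg (lam 2) h
    have : (Vn 0).card = 3 := by
      rw [Vn, Finset.card_eq_three]
      exact ⟨_, _, _, h01, h02, h12, rfl⟩
    rw [this]; norm_num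
  | succ n ih =>
    have := sum_Vn_succ n (fun _ => 1)
    simp only [Finset.sum_const, nsmul_eq_mul, mul_one] at this
    rw [this, ih]; ring

lemma integral_empMeas (n : ℕ) (g : Pt → ℝ) :
    ∫ x, g x ∂(empMeas n) = (3 ^ n : ℝ)⁻¹ * ∑ x ∈ Vn n, g x := by
  rw [empMeas, integral_smul_measure, integral_finsetSum_measure]
  · simp
  · intro i _
    exact integrable_dirac (by simp)

/-! ### The dimension -/

/-- The Hausdorff dimension of the gasket. -/
abbrev sgDim : ℝ := Real.log 3 / Real.log 2

lemma sgDim_pos : 0 < sgDim := div_pos (Real.log_pos (by norm_num)) (Real.log_pos (by norm_num))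

lemma two_rpow_sgDim : (2 : ℝ) ^ sgDim = 3 := by
  rw [Real.rpow_def_of_pos (by norm_num), sgDim, mul_div_cancel₀ _
    (Real.log_pos (by norm_num)).ne', Real.exp_log (by norm_num)]

lemma half_pow_rpow (k : ℕ) : ((2 : ℝ≥0∞)⁻¹ ^ k) ^ sgDim = (3 : ℝ≥0∞)⁻¹ ^ k := by
  have h2 : (2 : ℝ≥0∞) ^ sgDim = 3 := by
    have := ENNReal.ofReal_rpow_of_pos (x := 2) (p := sgDim) (by norm_num)
    rw [two_rpow_sgDim] at this
    simpa using this
  rw [← ENNReal.rpow_natCast, ← ENNReal.rpow_mul, mul_comm, ENNReal.rpow_mul, ENNReal.inv_rpow, h2,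
    ENNReal.rpow_natCast]

/-! ### Finiteness of the Hausdorff measure -/

/-- The reference point of a cell. -/
def ctr : (n : ℕ) → (Fin n → Fin 3) → Pt
  | 0, _ => 0
  | n + 1, w => sgMap (w 0) (ctr n (Fin.tail w))

lemma sg_cover (n : ℕ) : ∀ x ∈ sg, ∃ w, dist x (ctr n w) ≤ (2⁻¹ : ℝ) ^ n := by
  induction n with
  | zero =>
    intro x hx
    exact ⟨Fin.elim0, by simpa [ctr] using sg_norm hx⟩
  | succ n ih =>
    intro x hx
    rw [sg_eq] at hx
    obtain ⟨i, y, hy, rfl⟩ := mem_iUnion.1 hx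
    obtain ⟨w, hw⟩ := ih y hy
    refine ⟨Fin.cons i w, ?_⟩
    simp only [ctr, Fin.cons_zero, Fin.tail_cons, sgMap_dist, pow_succ]
    linarith

lemma sg_hausdorff_lt_top : μH[sgDim] sg < ∞ := by
  have hd : ∀ (n : ℕ) (w : Fin n → Fin 3),
      Metric.ediam (Metric.closedBall (ctr n w) ((2⁻¹ : ℝ) ^ n)) ≤ 2 * (2 : ℝ≥0∞)⁻¹ ^ n := by
    intro n w
    refine Metric.ediam_le fun x hx y hy => ?_
    have e : 2 * (2 : ℝ≥0∞)⁻¹ ^ n = ENNReal.ofReal (2 * (2⁻¹ : ℝ) ^ n) := by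
      rw [ENNReal.ofReal_mul (by norm_num), ENNReal.ofReal_pow (by norm_num),
        ENNReal.ofReal_inv_of_pos (by norm_num)]
      simp
    rw [e, edist_dist]
    apply ENNReal.ofReal_le_ofReal
    rw [Metric.mem_closedBall] at hx hy
    have := dist_triangle_right x y (ctr n w)
    linarith
  have h := Measure.hausdorffMeasure_le_liminf_sum (β := ℕ) (ι := fun n => Fin n → Fin 3) sgDim sg
    (l := atTop) (fun n => 2 * (2 : ℝ≥0∞)⁻¹ ^ n) ?_
    (fun n w => Metric.closedBall (ctr n w) ((2⁻¹ : ℝ) ^ n)) ?_ ?_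
  · refine h.trans_lt ?_
    have hb : ∀ n : ℕ, ∑ w : Fin n → Fin 3,
        Metric.ediam (Metric.closedBall (ctr n w) ((2⁻¹ : ℝ) ^ n)) ^ sgDim ≤ 2 ^ sgDim := by
      intro n
      calc _ ≤ ∑ w : Fin n → Fin 3, (2 * (2 : ℝ≥0∞)⁻¹ ^ n) ^ sgDim :=
            Finset.sum_le_sum fun w _ => ENNReal.rpow_le_rpow (hd n w) sgDim_pos.le
        _ = 2 ^ sgDim := by
          rw [ENNReal.mul_rpow_of_nonneg _ _ sgDim_pos.le, half_pow_rpow]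
          simp only [Finset.sum_const, Finset.card_univ, Fintype.card_pi, Fintype.card_fin,
            Finset.prod_const, nsmul_eq_mul]
          push_cast
          rw [mul_left_comm, ← mul_pow, ENNReal.mul_inv_cancel (by norm_num) (by norm_num)]
          simp
    calc _ ≤ liminf (fun _ : ℕ => (2 : ℝ≥0∞) ^ sgDim) atTop :=
          liminf_le_liminf (Eventually.of_forall hb)
      _ = 2 ^ sgDim := liminf_const _
      _ < ∞ := ENNReal.rpow_lt_top_of_nonneg sgDim_pos.le (by norm_num)
  · have := ENNReal.Tendsto.const_mul (a := 2)
      (ENNReal.tendsto_pow_atTop_nhds_zero_of_lt_one (r := 2⁻¹) (by simp)) (Or.inr (by norm_num))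
    simpa using this
  · exact Eventually.of_forall fun n w => hd n w
  · refine Eventually.of_forall fun n x hx => ?_
    obtain ⟨w, hw⟩ := sg_cover n x hx
    exact mem_iUnion.2 ⟨w, hw⟩

/-! ### Positivity of the Hausdorff measure -/

/-- The coding map from infinite words to the gasket. -/
def code (ω : ℕ → Fin 3) : Pt := ∑' j : ℕ, (2⁻¹ : ℝ) ^ (j + 1) • ptA (ω j)

lemma code_bound (j : ℕ) (ω : ℕ → Fin 3) :
    ‖(2⁻¹ : ℝ) ^ (j + 1) • ptA (ω j)‖ ≤ (2⁻¹ : ℝ) ^ (j + 1) := by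
  rw [norm_smul, Real.norm_of_nonneg (by positivity)]
  exact mul_le_of_le_one_right (by positivity) (ptA_norm _)

lemma geom_summable : Summable fun j : ℕ => (2⁻¹ : ℝ) ^ (j + 1) :=
  (summable_nat_add_iff 1).2 (summable_geometric_of_lt_one (by norm_num) (by norm_num))

lemma code_summable (ω : ℕ → Fin 3) : Summable fun j : ℕ => (2⁻¹ : ℝ) ^ (j + 1) • ptA (ω j) :=
  Summable.of_norm_bounded geom_summable fun j => code_bound j ω

lemma code_continuous : Continuous code := by
  refine continuous_tsum (fun j => ?_) geom_summable code_bound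
  have : Continuous ptA := continuous_of_discreteTopology
  fun_prop

lemma code_succ (ω : ℕ → Fin 3) : code ω = sgMap (ω 0) (code fun j => ω (j + 1)) := by
  rw [code, (code_summable ω).tsum_eq_zero_add, sgMap, code, smul_add, ← tsum_const_smul'']
  simp only [smul_smul]
  rw [add_comm]
  congr 1
  · refine tsum_congr fun j => ?_
    rw [pow_succ' _ (j + 1)]
  · simp

lemma partial_mem (n : ℕ) : ∀ ω : ℕ → Fin 3,
    ∑ j ∈ Finset.range n, (2⁻¹ : ℝ) ^ (j + 1) • ptA (ω j) ∈ Vn n := by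
  induction n with
  | zero => intro ω; simpa [ptA_zero] using ptA_mem_Vn 0 0
  | succ n ih =>
    intro ω
    refine mem_Vn_succ.2 ⟨ω 0, _, ih fun j => ω (j + 1), ?_⟩
    rw [Finset.sum_range_succ', sgMap, smul_add, Finset.smul_sum]
    simp [smul_smul, pow_succ']

lemma code_mem (ω : ℕ → Fin 3) : code ω ∈ sg := by
  refine mem_closure_of_tendsto (code_summable ω).hasSum.tendsto_sum_nat
    (Eventually.of_forall fun n => ?_)
  exact mem_iUnion.2 ⟨n, partial_mem n ω⟩

/-- Integer coordinates of the cell of level `k` containing `code ω`. -/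
def icoord (i : Fin 3) : ℕ → (ℕ → Fin 3) → ℕ
  | 0, _ => 0
  | k + 1, ω => (if i = ω 0 then 2 ^ k else 0) + icoord i k fun j => ω (j + 1)

lemma icoord_lt (i : Fin 3) (k : ℕ) : ∀ ω, icoord i k ω < 2 ^ k := by
  induction k with
  | zero => intro ω; simp [icoord]
  | succ k ih =>
    intro ω
    have := ih fun j => ω (j + 1)
    simp only [icoord, pow_succ]
    split_ifs <;> omega

lemma icoord_lam (i : Fin 3) (k : ℕ) : ∀ ω, ∃ z ∈ sg,
    (2 : ℝ) ^ k * lam i (code ω) = icoord i k ω + lam i z := by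
  induction k with
  | zero => intro ω; exact ⟨code ω, code_mem ω, by simp [icoord]⟩
  | succ k ih =>
    intro ω
    obtain ⟨z, hz, h⟩ := ih fun j => ω (j + 1)
    refine ⟨z, hz, ?_⟩
    rw [code_succ, lam_sgMap, icoord]
    push_cast
    rw [add_assoc, ← h, pow_succ]
    split_ifs <;> ring

lemma icoord_inj (k : ℕ) : ∀ ω ω' : ℕ → Fin 3, icoord 1 k ω = icoord 1 k ω' →
    icoord 2 k ω = icoord 2 k ω' → ∀ j < k, ω j = ω' j := by
  induction k with
  | zero => intro ω ω' _ _ j hj; omega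
  | succ k ih =>
    intro ω ω' h1 h2
    have a1 := icoord_lt 1 k fun j => ω (j + 1)
    have a2 := icoord_lt 2 k fun j => ω (j + 1)
    have b1 := icoord_lt 1 k fun j => ω' (j + 1)
    have b2 := icoord_lt 2 k fun j => ω' (j + 1)
    simp only [icoord] at h1 h2
    have e1 : (1 = ω 0 ↔ 1 = ω' 0) := by
      split_ifs at h1 with h h' h' <;> first | tauto | omega
    have e2 : (2 = ω 0 ↔ 2 = ω' 0) := by
      split_ifs at h2 with h h' h' <;> first | tauto | omega
    have e : ω 0 = ω' 0 := by
      revert e1 e2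
      generalize ω 0 = u
      generalize ω' 0 = v
      revert u v
      decide
    rw [e] at h1 h2
    have := ih _ _ (Nat.add_left_cancel h1) (Nat.add_left_cancel h2)
    intro j hj
    cases j with
    | zero => exact e
    | succ j => exact this j (by omega)

/-- The uniform measure on three letters. -/
def unif3 : Measure (Fin 3) := (3 : ℝ≥0∞)⁻¹ • Measure.count

instance : IsProbabilityMeasure unif3 := by
  constructor
  simp [unif3]
  exact ENNReal.inv_mul_cancel (by norm_num) (by norm_num)

/-- The Bernoulli measure on infinite words. -/
def bern : Measure (ℕ → Fin 3) := Measure.infinitePi fun _ => unif3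

instance : IsProbabilityMeasure bern := by unfold bern; infer_instance

lemma bern_cyl (k : ℕ) (ω : ℕ → Fin 3) : bern {ω' | ∀ j < k, ω' j = ω j} = (3 : ℝ≥0∞)⁻¹ ^ k := by
  have : {ω' : ℕ → Fin 3 | ∀ j < k, ω' j = ω j}
      = Set.pi (Finset.range k : Set ℕ) fun j => {ω j} := by
    ext x; simp [Set.mem_pi]
  rw [this, bern, Measure.infinitePi_pi _ (fun i _ => MeasurableSet.singleton _)]
  simp [unif3]

lemma bern_icoord (k a b : ℕ) :
    bern {ω | icoord 1 k ω = a ∧ icoord 2 k ω = b} ≤ (3 : ℝ≥0∞)⁻¹ ^ k := by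
  rcases Set.eq_empty_or_nonempty {ω | icoord 1 k ω = a ∧ icoord 2 k ω = b} with h | ⟨ω, hω⟩
  · rw [h]; simp
  · rw [← bern_cyl k ω]
    apply measure_mono
    intro ω' hω'
    exact icoord_inj k ω' ω (hω'.1.trans hω.1.symm) (hω'.2.trans hω.2.symm)

lemma icoord_window {i : Fin 3} {k : ℕ} {ω ω' : ℕ → Fin 3}
    (h : dist (code ω) (code ω') ≤ (2⁻¹ : ℝ) ^ k) :
    icoord i k ω ∈ Finset.Icc (icoord i k ω' - 3) (icoord i k ω' + 3) := by
  obtain ⟨z, hz, e⟩ := icoord_lam i k ω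
  obtain ⟨z', hz', e'⟩ := icoord_lam i k ω'
  have h1 := sg_lam hz i
  have h2 := sg_lam hz' i
  have h3 := sg_lam_le hz i
  have h4 := sg_lam_le hz' i
  have hp : (0 : ℝ) < 2 ^ k := by positivity
  have h5 : |(2 : ℝ) ^ k * lam i (code ω) - 2 ^ k * lam i (code ω')| ≤ 2 := by
    rw [← mul_sub, abs_mul, abs_of_pos hp]
    calc _ ≤ (2 : ℝ) ^ k * (2 * (2⁻¹ : ℝ) ^ k) := by
          gcongr
          exact (lam_dist i _ _).trans (by linarith)
      _ = 2 := by rw [inv_pow]; field_simp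
  rw [e, e'] at h5
  obtain ⟨h6, h7⟩ := abs_le.1 h5
  have h8 : (icoord i k ω : ℝ) ≤ ((icoord i k ω' + 3 : ℕ) : ℝ) := by push_cast; linarith
  have h9 : (icoord i k ω' : ℝ) ≤ ((icoord i k ω + 3 : ℕ) : ℝ) := by push_cast; linarith
  have h8' : icoord i k ω ≤ icoord i k ω' + 3 := by exact_mod_cast h8
  have h9' : icoord i k ω' ≤ icoord i k ω + 3 := by exact_mod_cast h9
  rw [Finset.mem_Icc]; omega

lemma bern_preimage (k : ℕ) (s : Set Pt) (hs : ∀ x ∈ s, ∀ y ∈ s, dist x y ≤ (2⁻¹ : ℝ) ^ k) :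
    bern (code ⁻¹' s) ≤ 49 * (3 : ℝ≥0∞)⁻¹ ^ k := by
  rcases Set.eq_empty_or_nonempty (code ⁻¹' s) with h | ⟨ω, hω⟩
  · rw [h]; simp
  · let W : Fin 3 → Finset ℕ := fun i => Finset.Icc (icoord i k ω - 3) (icoord i k ω + 3)
    have hW : ∀ i, (W i).card ≤ 7 := fun i => by simp [W]; omega
    calc bern (code ⁻¹' s)
        ≤ bern (⋃ p ∈ W 1 ×ˢ W 2, {ω' | icoord 1 k ω' = p.1 ∧ icoord 2 k ω' = p.2}) := by
          apply measure_mono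
          intro ω' hω'
          simp only [mem_iUnion]
          exact ⟨(icoord 1 k ω', icoord 2 k ω'), Finset.mem_product.2
            ⟨icoord_window (hs _ hω' _ hω), icoord_window (hs _ hω' _ hω)⟩, rfl, rfl⟩
      _ ≤ ∑ p ∈ W 1 ×ˢ W 2, bern {ω' | icoord 1 k ω' = p.1 ∧ icoord 2 k ω' = p.2} :=
          measure_biUnion_finset_le _ _
      _ ≤ ∑ p ∈ W 1 ×ˢ W 2, (3 : ℝ≥0∞)⁻¹ ^ k := Finset.sum_le_sum fun p _ => bern_icoord k _ _
      _ ≤ 49 * (3 : ℝ≥0∞)⁻¹ ^ k := by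
          rw [Finset.sum_const, nsmul_eq_mul]
          gcongr
          rw [Finset.card_product]
          exact_mod_cast Nat.mul_le_mul (hW 1) (hW 2)

/-- The self-similar probability measure on the gasket. -/
def selfSim : Measure Pt := bern.map code

lemma selfSim_le (k : ℕ) (s : Set Pt) (hs : Metric.ediam s ≤ (2 : ℝ≥0∞)⁻¹ ^ k) :
    selfSim s ≤ 49 * (3 : ℝ≥0∞)⁻¹ ^ k := by
  refine (measure_mono subset_closure).trans ?_
  rw [selfSim, Measure.map_apply code_continuous.measurable isClosed_closure.measurableSet]
  apply bern_preimage
  intro x hx y hy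
  rw [← Metric.ediam_closure] at hs
  have h := (Metric.edist_le_ediam_of_mem hx hy).trans hs
  rw [edist_dist] at h
  have e : (2 : ℝ≥0∞)⁻¹ ^ k = ENNReal.ofReal ((2⁻¹ : ℝ) ^ k) := by
    rw [ENNReal.ofReal_pow (by norm_num), ENNReal.ofReal_inv_of_pos (by norm_num)]
    simp
  rw [e] at h
  exact (ENNReal.ofReal_le_ofReal_iff (by positivity)).1 h

lemma selfSim_le_ediam (s : Set Pt) (hs : Metric.ediam s ≤ 1) :
    selfSim s ≤ 147 * Metric.ediam s ^ sgDim := by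
  by_cases h0 : Metric.ediam s = 0
  · have ht : Tendsto (fun k : ℕ => 49 * (3 : ℝ≥0∞)⁻¹ ^ k) atTop (𝓝 (49 * 0)) :=
      ENNReal.Tendsto.const_mul (ENNReal.tendsto_pow_atTop_nhds_zero_of_lt_one
        (by rw [ENNReal.inv_lt_one]; norm_num)) (Or.inr (by norm_num))
    rw [mul_zero] at ht
    have := ge_of_tendsto' ht fun k => selfSim_le k s (by rw [h0]; exact zero_le)
    exact this.trans zero_le
  · have hex : ∃ k : ℕ, (2 : ℝ≥0∞)⁻¹ ^ k < Metric.ediam s := by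
      have ht := ENNReal.tendsto_pow_atTop_nhds_zero_of_lt_one (r := 2⁻¹) (by simp)
      exact (ht.eventually (gt_mem_nhds (pos_iff_ne_zero.2 h0))).exists
    have hk := Nat.find_spec hex
    have hmin := fun m => Nat.find_min hex (m := m)
    generalize Nat.find hex = k at hk hmin
    cases k with
    | zero => simp at hk; exact absurd hs (not_le.2 hk)
    | succ k =>
      have h1 := selfSim_le k s (not_lt.1 (hmin k (Nat.lt_succ_self k)))
      have h2 := ENNReal.rpow_le_rpow hk.le sgDim_pos.le
      rw [half_pow_rpow] at h2
      calc selfSim s ≤ 49 * (3 : ℝ≥0∞)⁻¹ ^ k := h1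
        _ = 147 * (3 : ℝ≥0∞)⁻¹ ^ (k + 1) := by
          have e : (147 : ℝ≥0∞) = 49 * 3 := by norm_num
          rw [e, pow_succ', mul_assoc, ← mul_assoc 3, ENNReal.mul_inv_cancel (by norm_num) (by norm_num),
            one_mul]
        _ ≤ _ := by gcongr

lemma sg_hausdorff_pos : 0 < μH[sgDim] sg := by
  have h : (147 : ℝ≥0∞)⁻¹ • selfSim ≤ μH[sgDim] := by
    refine Measure.le_hausdorffMeasure sgDim _ 1 one_pos fun s hs => ?_
    rw [Measure.smul_apply, smul_eq_mul]
    calc _ ≤ (147 : ℝ≥0∞)⁻¹ * (147 * Metric.ediam s ^ sgDim) := by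
          gcongr; exact selfSim_le_ediam s hs
      _ = _ := by
        rw [← mul_assoc, ENNReal.inv_mul_cancel (by norm_num) (by norm_num), one_mul]
  have h1 : selfSim sg = 1 := by
    rw [selfSim, Measure.map_apply code_continuous.measurable sg_compact.measurableSet]
    have : code ⁻¹' sg = univ := eq_univ_of_forall code_mem
    rw [this, measure_univ]
  refine lt_of_lt_of_le ?_ (h sg)
  rw [Measure.smul_apply, h1]
  simp

/-! ### Self-similarity of the Hausdorff measure -/

lemma sgMap_eq_homothety (i : Fin 3) : sgMap i = AffineMap.homothety (ptA i) (2⁻¹ : ℝ) := by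
  funext z
  ext k
  simp [AffineMap.homothety_apply, sgMap_apply]
  ring

lemma map_sgMap (i : Fin 3) :
    Measure.map (sgMap i) (μH[sgDim] : Measure Pt) = (3 : ℝ≥0) • μH[sgDim] := by
  rw [sgMap_eq_homothety, map_homothety_hausdorffMeasure sgDim_pos.le _ (by norm_num)]
  congr 1
  apply NNReal.coe_injective
  simp [two_rpow_sgDim]

lemma sgMap_embedding (i : Fin 3) : MeasurableEmbedding (sgMap i) :=
  (sgMap_continuous i).measurableEmbedding (sgMap_injective i)

lemma sg_integrable {g : Pt → ℝ} (hg : Continuous g) : IntegrableOn g sg μH[sgDim] := by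
  obtain ⟨C, hC⟩ := sg_compact.exists_bound_of_continuousOn hg.continuousOn
  exact Measure.integrableOn_of_bounded sg_hausdorff_lt_top.ne hg.aestronglyMeasurable
    (M := C) ((ae_restrict_iff' sg_compact.measurableSet).2 (Eventually.of_forall hC))

lemma cell_integral (i : Fin 3) (g : Pt → ℝ) :
    ∫ x in sg, g (sgMap i x) ∂μH[sgDim] = 3 * ∫ x in sgMap i '' sg, g x ∂μH[sgDim] := by
  have h := (sgMap_embedding i).setIntegral_map (μ := μH[sgDim]) g (sgMap i '' sg)
  rw [(sgMap_injective i).preimage_image, map_sgMap, Measure.restrict_smul,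
    integral_smul_nnreal_measure] at h
  rw [← h, NNReal.smul_def]
  simp

lemma sg_integral_rec {g : Pt → ℝ} (hg : Continuous g) :
    ∫ x in sg, (g (sgMap 0 x) + g (sgMap 1 x) + g (sgMap 2 x)) / 3 ∂μH[sgDim]
      = ∫ x in sg, g x ∂μH[sgDim] := by
  have hi : ∀ i, IntegrableOn (fun x => g (sgMap i x)) sg μH[sgDim] := fun i =>
    sg_integrable (hg.comp (sgMap_continuous i))
  have hi2 : IntegrableOn (fun x => g (sgMap 0 x) + g (sgMap 1 x)) sg μH[sgDim] :=
    (hi 0).add (hi 1)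
  rw [integral_div, integral_add hi2 (hi 2), integral_add (hi 0) (hi 1)]
  simp only [cell_integral]
  have h := integral_iUnion_ae (μ := (μH[sgDim] : Measure Pt)) (f := g)
    (s := fun i : Fin 3 => sgMap i '' sg)
    (fun i => (sg_compact.image (sgMap_continuous i)).measurableSet.nullMeasurableSet) ?_ ?_
  · rw [← sg_eq, tsum_fintype, Fin.sum_univ_three] at h
    rw [h]; ring
  · intro i j hij
    have hsub : sgMap i '' sg ∩ sgMap j '' sg ⊆ {sgMap i (ptA j)} := by
      rintro _ ⟨⟨x, hx, rfl⟩, y, hy, hxy⟩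
      rw [cell_inter hij hx hy hxy.symm]
      rfl
    have := Measure.nullSingletonClass_hausdorff Pt sgDim_pos
    exact measure_mono_null hsub (measure_singleton _)
  · rw [← sg_eq]
    exact sg_integrable hg

/-! ### Weak convergence -/

/-- Vertex averages. -/
def vavg (n : ℕ) (g : Pt → ℝ) : ℝ := (3 ^ n : ℝ)⁻¹ * ∑ x ∈ Vn n, g x

lemma vavg_succ (n : ℕ) (g : Pt → ℝ) :
    vavg (n + 1) g = vavg n (fun x => (g (sgMap 0 x) + g (sgMap 1 x) + g (sgMap 2 x)) / 3)
      - (3⁻¹ : ℝ) ^ n * ((g (sgMap 0 (ptA 1)) + g (sgMap 0 (ptA 2)) + g (sgMap 1 (ptA 2))) / 3) := by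
  rw [vavg, vavg, sum_Vn_succ, ← Finset.sum_div, pow_succ, inv_pow]
  field_simp

lemma sg_mass_pos : 0 < (μH[sgDim] sg).toReal :=
  ENNReal.toReal_pos sg_hausdorff_pos.ne' sg_hausdorff_lt_top.ne

lemma vavg_tendsto_aux (k : ℕ) : ∀ (g : Pt → ℝ), Continuous g → ∀ ε : ℝ, 0 < ε →
    (∀ x ∈ sg, ∀ y ∈ sg, dist x y ≤ 2 * (2⁻¹ : ℝ) ^ k → |g x - g y| ≤ ε) →
    ∀ δ, 3 * ε < δ → ∀ᶠ n in atTop,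
      |vavg n g - 3 / 2 / (μH[sgDim] sg).toReal * ∫ x in sg, g x ∂μH[sgDim]| ≤ δ := by
  induction k with
  | zero =>
    intro g hg ε hε hosc δ hδ
    set m := (μH[sgDim] sg).toReal with hm
    have hmp : 0 < m := sg_mass_pos
    set v := g (ptA 0) with hv
    have hv' : ∀ x ∈ sg, |g x - v| ≤ ε := by
      intro x hx
      refine hosc x hx _ (ptA_mem_sg 0) ?_
      rw [ptA_zero, dist_zero_right]
      have := sg_norm hx
      norm_num
      linarith
    have hJ : |(∫ x in sg, g x ∂μH[sgDim]) - v * m| ≤ ε * m := by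
      have e : (∫ x in sg, g x ∂μH[sgDim]) - v * m = ∫ x in sg, (g x - v) ∂μH[sgDim] := by
        rw [integral_sub (sg_integrable hg) (sg_integrable continuous_const), setIntegral_const]
        simp [Measure.real, hm, mul_comm]
      rw [e]
      exact norm_setIntegral_le_of_norm_le_const (f := fun x => g x - v) sg_hausdorff_lt_top hv'
    have hJ' : |3 / 2 / m * (∫ x in sg, g x ∂μH[sgDim]) - 3 / 2 * v| ≤ 3 / 2 * ε := by
      have e : 3 / 2 / m * (∫ x in sg, g x ∂μH[sgDim]) - 3 / 2 * v
          = 3 / 2 / m * ((∫ x in sg, g x ∂μH[sgDim]) - v * m) := by field_simp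
      rw [e, abs_mul, abs_of_pos (by positivity)]
      calc _ ≤ 3 / 2 / m * (ε * m) := by gcongr
        _ = _ := by field_simp
    have hA : ∀ n, |vavg n g - (3 / 2 + 3 / 2 * (3⁻¹ : ℝ) ^ n) * v|
        ≤ (3 / 2 + 3 / 2 * (3⁻¹ : ℝ) ^ n) * ε := by
      intro n
      have ec : (3 / 2 + 3 / 2 * (3⁻¹ : ℝ) ^ n) = (3 ^ n : ℝ)⁻¹ * (Vn n).card := by
        rw [card_Vn, inv_pow]; field_simp
      have e : vavg n g - (3 / 2 + 3 / 2 * (3⁻¹ : ℝ) ^ n) * v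
          = (3 ^ n : ℝ)⁻¹ * ∑ x ∈ Vn n, (g x - v) := by
        rw [ec, vavg, Finset.sum_sub_distrib, Finset.sum_const, nsmul_eq_mul]; ring
      rw [e, abs_mul, abs_of_pos (by positivity), ec, mul_assoc]
      gcongr
      refine (Finset.abs_sum_le_sum_abs _ _).trans ?_
      refine (Finset.sum_le_sum fun x hx => hv' x (Vn_subset_sg hx)).trans ?_
      rw [Finset.sum_const, nsmul_eq_mul]
    have ht : Tendsto (fun n : ℕ => 3 * ε + (3⁻¹ : ℝ) ^ n * (3 / 2 * (ε + |v|))) atTop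
        (𝓝 (3 * ε + 0 * (3 / 2 * (ε + |v|)))) :=
      tendsto_const_nhds.add
        ((tendsto_pow_atTop_nhds_zero_of_lt_one (by norm_num) (by norm_num)).mul_const _)
    rw [zero_mul, add_zero] at ht
    filter_upwards [ht.eventually (gt_mem_nhds hδ)] with n hn
    refine le_trans ?_ hn.le
    have e : vavg n g - 3 / 2 / m * (∫ x in sg, g x ∂μH[sgDim])
        = (vavg n g - (3 / 2 + 3 / 2 * (3⁻¹ : ℝ) ^ n) * v) + 3 / 2 * (3⁻¹ : ℝ) ^ n * v
          - (3 / 2 / m * (∫ x in sg, g x ∂μH[sgDim]) - 3 / 2 * v) := by ring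
    rw [e]
    refine (abs_sub _ _).trans ?_
    have t1 := abs_add_le (vavg n g - (3 / 2 + 3 / 2 * (3⁻¹ : ℝ) ^ n) * v)
      (3 / 2 * (3⁻¹ : ℝ) ^ n * v)
    have t2 : |3 / 2 * (3⁻¹ : ℝ) ^ n * v| = 3 / 2 * (3⁻¹ : ℝ) ^ n * |v| := by
      rw [abs_mul, abs_of_pos (by positivity)]
    have := hA n
    nlinarith
  | succ k ih =>
    intro g hg ε hε hosc δ hδ
    have hc : ∀ i, Continuous fun x => g (sgMap i x) := fun i => hg.comp (sgMap_continuous i)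
    have h := ih (fun x => (g (sgMap 0 x) + g (sgMap 1 x) + g (sgMap 2 x)) / 3)
      ((((hc 0).add (hc 1)).add (hc 2)).div_const _) ε hε ?_ ((3 * ε + δ) / 2) (by linarith)
    · rw [sg_integral_rec hg] at h
      set K := (g (sgMap 0 (ptA 1)) + g (sgMap 0 (ptA 2)) + g (sgMap 1 (ptA 2))) / 3 with hK
      have ht : Tendsto (fun n : ℕ => |(3⁻¹ : ℝ) ^ n * K|) atTop (𝓝 |0 * K|) :=
        ((tendsto_pow_atTop_nhds_zero_of_lt_one (by norm_num) (by norm_num)).mul_const _).abs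
      rw [zero_mul, abs_zero] at ht
      have h2 := ht.eventually (gt_mem_nhds (show 0 < (δ - 3 * ε) / 2 by linarith))
      suffices hs : ∀ᶠ n in atTop, |vavg (n + 1) g
          - 3 / 2 / (μH[sgDim] sg).toReal * ∫ x in sg, g x ∂μH[sgDim]| ≤ δ by
        obtain ⟨N, hN⟩ := eventually_atTop.1 hs
        refine eventually_atTop.2 ⟨N + 1, fun n hn => ?_⟩
        obtain ⟨p, rfl⟩ : ∃ p, n = p + 1 := ⟨n - 1, by omega⟩
        exact hN p (by omega)
      filter_upwards [h, h2] with n h1 h2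
      rw [vavg_succ, sub_right_comm]
      refine (abs_sub _ _).trans ?_
      linarith
    · intro x hx y hy hxy
      have hi : ∀ i, |g (sgMap i x) - g (sgMap i y)| ≤ ε := by
        intro i
        refine hosc _ (sgMap_mem_sg hx) _ (sgMap_mem_sg hy) ?_
        rw [sgMap_dist, pow_succ]
        linarith
      have h0 := abs_le.1 (hi 0)
      have h1 := abs_le.1 (hi 1)
      have h2 := abs_le.1 (hi 2)
      rw [abs_le]
      constructor <;> linarith

lemma vavg_tendsto {g : Pt → ℝ} (hg : Continuous g) :
    Tendsto (fun n => vavg n g) atTop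
      (𝓝 (3 / 2 / (μH[sgDim] sg).toReal * ∫ x in sg, g x ∂μH[sgDim])) := by
  rw [Metric.tendsto_nhds]
  intro δ hδ
  have huc := sg_compact.uniformContinuousOn_of_continuous hg.continuousOn
  rw [Metric.uniformContinuousOn_iff] at huc
  obtain ⟨η, hη, h⟩ := huc (δ / 8) (by linarith)
  obtain ⟨k, hk⟩ := exists_pow_lt_of_lt_one (show 0 < η / 2 by linarith)
    (show (2⁻¹ : ℝ) < 1 by norm_num)
  have := vavg_tendsto_aux k g hg (δ / 8) (by linarith)
    (fun x hx y hy hxy => (h x hx y hy (by linarith)).le) (δ / 2) (by linarith)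
  filter_upwards [this] with n hn
  rw [Real.dist_eq]
  linarith

/-- With `d_f = log 3/log 2`: the `d_f`-dimensional Hausdorff measure of `V` is
positive and finite, and the measures `μₙ = 3⁻ⁿ Σ_{x∈Vₙ} δₓ` converge weakly to
`c · H^{d_f}|_V` for some constant `c ∈ (0,∞)`. -/
theorem statement12 :
    0 < μH[Real.log 3 / Real.log 2] sg ∧ μH[Real.log 3 / Real.log 2] sg < ∞ ∧
    ∃ c : ℝ≥0∞, 0 < c ∧ c < ∞ ∧
      ∀ g : Pt →ᵇ ℝ,
        Tendsto (fun n => ∫ x, g x ∂(empMeas n)) atTop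
          (𝓝 (∫ x, g x ∂(c • (μH[Real.log 3 / Real.log 2]).restrict sg))) := by
  refine ⟨sg_hausdorff_pos, sg_hausdorff_lt_top,
    ENNReal.ofReal (3 / 2 / (μH[sgDim] sg).toReal), ?_, ENNReal.ofReal_lt_top, ?_⟩
  · have := sg_mass_pos
    exact ENNReal.ofReal_pos.2 (by positivity)
  · intro g
    have := sg_mass_pos
    have h := vavg_tendsto g.continuous
    rw [integral_smul_measure, ENNReal.toReal_ofReal (by positivity), smul_eq_mul]
    simpa only [integral_empMeas, vavg] using h

end
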